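/- Let ν be a probability measure on ℝ with ν({0}) < 1. Then every unbiased shift T of B embedding ν satisfies P₀{T = 0} = 0. -/

import Mathlib

open MeasureTheory ProbabilityTheory

/-- A two-sided standard Brownian motion: a.s. continuous paths, `B₀ = 0`, independent
increments, and `B_t − B_s` centered Gaussian with variance `t − s` for `s < t`. -/
structure IsTwoSidedBM {Ω : Type*} [MeasurableSpace Ω] (P : Measure Ω) (B : ℝ → Ω → ℝ) :
    Prop where
  aemeas : ∀ t : ℝ, AEMeasurable (B t) P
  cont : ∀ᵐ ω ∂P, Continuous fun t => B t ω
  zero : ∀ᵐ ω ∂P, B 0 ω = 0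
  indepIncr : ∀ (n : ℕ) (t : Fin (n + 1) → ℝ), Monotone t →
    iIndepFun
      (fun (i : Fin n) ω => B (t i.succ) ω - B (t i.castSucc) ω) P
  gaussIncr : ∀ s t : ℝ, s < t →
    Measure.map (fun ω => B t ω - B s ω) P = gaussianReal 0 (Real.toNNReal (t - s))

/-- A random time: a measurable function of the path of `B`. -/
def IsRandomTime {Ω : Type*} [MeasurableSpace Ω] (B : ℝ → Ω → ℝ) (T : Ω → ℝ) : Prop :=
  @Measurable Ω ℝ (MeasurableSpace.comap (fun ω (t : ℝ) => B t ω) inferInstance) _ T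

/-- An unbiased shift: a random time `T` such that `(B_{T+t} − B_T)_{t∈ℝ}` is a two-sided
Brownian motion independent of `B_T`. -/
def IsUnbiasedShift {Ω : Type*} [MeasurableSpace Ω] (P : Measure Ω) (B : ℝ → Ω → ℝ)
    (T : Ω → ℝ) : Prop :=
  IsRandomTime B T ∧
  IsTwoSidedBM P (fun t ω => B (T ω + t) ω - B (T ω) ω) ∧
  IndepFun (fun ω (t : ℝ) => B (T ω + t) ω - B (T ω) ω) (fun ω => B (T ω) ω) P

/-- `T` embeds the distribution `ν`: `B_T` has law `ν`. -/
def Embeds {Ω : Type*} [MeasurableSpace Ω] (P : Measure Ω) (B : ℝ → Ω → ℝ) (T : Ω → ℝ)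
    (ν : Measure ℝ) : Prop :=
  Measure.map (fun ω => B (T ω) ω) P = ν

/-- A stopping time with respect to the filtration `(σ(B_s : s ≤ t))_{t ≥ 0}`. -/
def IsBMStoppingTime {Ω : Type*} [MeasurableSpace Ω] (B : ℝ → Ω → ℝ) (T : Ω → ℝ) : Prop :=
  ∀ t : ℝ, 0 ≤ t →
    MeasurableSet[⨆ s ∈ Set.Iic t, MeasurableSpace.comap (B s) inferInstance] {ω | T ω ≤ t}

/-!
Both `B` and the shifted path `(B_{T+t} - B_T)_t` are two-sided Brownian motions, so they have the
same law on path space. The event `{T = 0}` is `{B ∈ A}` for a measurable set `A` of paths. On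
`{T = 0}` the shifted path is `B` itself and `B_T = B_0 = 0`, hence, by independence of the shifted
path and `B_T`,
`P(T = 0) ≤ P((B_{T+t} - B_T)_t ∈ A, B_T = 0) = P(T = 0) * ν {0}`.
Since `ν {0} < 1`, this forces `P(T = 0) = 0`.
-/

section Increments

theorem sub_eq_partialSum_sub_partialSum {E : Type*} [AddCommGroup E] {n : ℕ}
    (f : Fin (n + 1) → E) (j k : Fin (n + 1)) :
    f j - f k = Fin.partialSum (fun i : Fin n ↦ f i.succ - f i.castSucc) j -
      Fin.partialSum (fun i : Fin n ↦ f i.succ - f i.castSucc) k := by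
  have value_eq (l : Fin (n + 1)) :
      f l = f 0 + Fin.partialSum (fun i : Fin n ↦ f i.succ - f i.castSucc) l := by
    simpa only [neg_add_eq_sub, Pi.vadd_apply, vadd_eq_add] using
      (congrFun (Fin.partialSum_left_neg f) l).symm
  rw [value_eq j, value_eq k, add_sub_add_left_eq_sub]

theorem measurable_partialSum {E : Type*} [AddMonoid E] [MeasurableSpace E] [MeasurableAdd₂ E]
    {n : ℕ} (j : Fin (n + 1)) : Measurable fun d : Fin n → E ↦ Fin.partialSum d j := by
  induction j using Fin.induction with
  | zero => simp only [Fin.partialSum_zero, measurable_const]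
  | succ j ih => simpa only [Fin.partialSum_succ] using ih.fun_add (measurable_pi_apply j)

theorem exists_monotone_grid {ι : Type*} [LinearOrder ι] (o : ι) (I : Finset ι) :
    ∃ (n : ℕ) (t : Fin (n + 1) → ι) (k : Fin (n + 1)) (e : I → Fin (n + 1)),
      Monotone t ∧ t k = o ∧ ∀ i, t (e i) = i := by
  have card_insert : (insert o I).card = (insert o I).card - 1 + 1 :=
    (Nat.sub_add_cancel (Finset.card_pos.2 (Finset.insert_nonempty o I))).symm
  let sorted := (insert o I).orderIsoOfFin card_insert
  exact ⟨_, fun j ↦ sorted j, sorted.symm ⟨o, Finset.mem_insert_self o I⟩,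
    fun i ↦ sorted.symm ⟨i, Finset.mem_insert_of_mem i.2⟩, sorted.monotone, by simp, by simp⟩

variable {ι Ω Ω' E : Type*} [LinearOrder ι] [MeasurableSpace Ω] [MeasurableSpace Ω']
  [AddCommGroup E] [MeasurableSpace E] [MeasurableAdd₂ E] [MeasurableSub₂ E]
  {P : Measure Ω} {Q : Measure Ω'} {X : ι → Ω → E} {Y : ι → Ω' → E}

theorem identDistrib_grid_sub_of_hasIndepIncrements
    (hX : HasIndepIncrements X P) (hY : HasIndepIncrements Y Q)
    (hXY : ∀ s t, s ≤ t →
      IdentDistrib (fun ω ↦ X t ω - X s ω) (fun ω ↦ Y t ω - Y s ω) P Q)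
    {n : ℕ} {t : Fin (n + 1) → ι} (ht : Monotone t) (k : Fin (n + 1)) :
    IdentDistrib (fun ω j ↦ X (t j) ω - X (t k) ω) (fun ω j ↦ Y (t j) ω - Y (t k) ω) P Q := by
  have increments : IdentDistrib (fun ω (i : Fin n) ↦ X (t i.succ) ω - X (t i.castSucc) ω)
      (fun ω i ↦ Y (t i.succ) ω - Y (t i.castSucc) ω) P Q :=
    .pi (fun i ↦ hXY _ _ (ht i.castSucc_le_succ)) (hX n t ht) (hY n t ht)
  have measurable_path : Measurable fun (d : Fin n → E) (j : Fin (n + 1)) ↦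
      Fin.partialSum d j - Fin.partialSum d k :=
    measurable_pi_lambda _ fun j ↦ (measurable_partialSum j).sub (measurable_partialSum k)
  convert increments.comp measurable_path using 3 with ω j ω j
  · exact sub_eq_partialSum_sub_partialSum (fun j ↦ X (t j) ω) _ k
  · exact sub_eq_partialSum_sub_partialSum (fun j ↦ Y (t j) ω) _ k

theorem identDistrib_restrict_sub_of_hasIndepIncrements
    (hX : HasIndepIncrements X P) (hY : HasIndepIncrements Y Q)
    (hXY : ∀ s t, s ≤ t →
      IdentDistrib (fun ω ↦ X t ω - X s ω) (fun ω ↦ Y t ω - Y s ω) P Q)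
    (o : ι) (I : Finset ι) :
    IdentDistrib (fun ω ↦ I.restrict fun t ↦ X t ω - X o ω)
      (fun ω ↦ I.restrict fun t ↦ Y t ω - Y o ω) P Q := by
  obtain ⟨n, t, k, e, ht, rfl, hte⟩ := exists_monotone_grid o I
  have select : Measurable fun (x : Fin (n + 1) → E) (i : I) ↦ x (e i) := by fun_prop
  simpa only [Function.comp_def, hte, Finset.restrict_def] using
    (identDistrib_grid_sub_of_hasIndepIncrements hX hY hXY ht k).comp select

end Increments

section PathLaw

variable {ι Ω E : Type*} [MeasurableSpace Ω] [MeasurableSpace E] {P : Measure Ω}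

/-- The law on path space of a process with a.e. measurable coordinates. For uncountable `ι` the
path map need not be a.e. measurable, and `Measure.map` would then be `0`; it is however measurable
for the completed σ-algebra, so the completion of `P` is pushed forward instead. -/
noncomputable def pathLaw (P : Measure Ω) (X : ι → Ω → E) : Measure (ι → E) :=
  Measure.map (fun (ω : NullMeasurableSpace Ω P) t ↦ X t ω) P.completion

theorem pathLaw_apply {X : ι → Ω → E} (hX : ∀ t, AEMeasurable (X t) P) {A : Set (ι → E)}
    (hA : MeasurableSet A) : pathLaw P X A = P ((fun ω t ↦ X t ω) ⁻¹' A) := by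
  have measurable_path : Measurable fun (ω : NullMeasurableSpace Ω P) t ↦ X t ω :=
    measurable_pi_lambda _ fun t ↦ (hX t).nullMeasurable.measurable'
  exact (Measure.map_apply measurable_path hA).trans (Measure.completion_apply P _)

theorem isProjectiveLimit_pathLaw {X : ι → Ω → E} (hX : ∀ t, AEMeasurable (X t) P) :
    IsProjectiveLimit (pathLaw P X) fun I ↦ P.map fun ω ↦ I.restrict fun t ↦ X t ω := by
  intro I
  ext A hA
  have measurable_restrict : Measurable (I.restrict : (ι → E) → I → E) :=
    Finset.measurable_restrict I
  have aemeasurable_restrict : AEMeasurable (fun ω ↦ I.restrict fun t ↦ X t ω) P :=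
    aemeasurable_pi_lambda _ fun t ↦ hX t
  rw [Measure.map_apply measurable_restrict hA, pathLaw_apply hX (measurable_restrict hA),
    Measure.map_apply_of_aemeasurable aemeasurable_restrict hA]
  rfl

theorem measure_preimage_path_eq {Ω' : Type*} [MeasurableSpace Ω'] {Q : Measure Ω'}
    [IsFiniteMeasure P] {X : ι → Ω → E} {Y : ι → Ω' → E}
    (hXY : ∀ I : Finset ι, IdentDistrib (fun ω ↦ I.restrict fun t ↦ X t ω)
      (fun ω ↦ I.restrict fun t ↦ Y t ω) P Q)
    {A : Set (ι → E)} (hA : MeasurableSet A) :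
    P ((fun ω t ↦ X t ω) ⁻¹' A) = Q ((fun ω t ↦ Y t ω) ⁻¹' A) := by
  have hX (t : ι) : AEMeasurable (X t) P :=
    aemeasurable_pi_iff.1 (hXY {t}).aemeasurable_fst ⟨t, Finset.mem_singleton_self t⟩
  have hY (t : ι) : AEMeasurable (Y t) Q :=
    aemeasurable_pi_iff.1 (hXY {t}).aemeasurable_snd ⟨t, Finset.mem_singleton_self t⟩
  have limit_Y := isProjectiveLimit_pathLaw hY
  simp only [← (hXY _).map_eq] at limit_Y
  rw [← pathLaw_apply hX hA, ← pathLaw_apply hY hA,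
    (isProjectiveLimit_pathLaw hX).unique limit_Y]

end PathLaw

namespace IsTwoSidedBM

variable {Ω Ω' : Type*} [MeasurableSpace Ω] [MeasurableSpace Ω'] {P : Measure Ω} {Q : Measure Ω'}
  {X : ℝ → Ω → ℝ} {Y : ℝ → Ω' → ℝ}

theorem hasIndepIncrements (hX : IsTwoSidedBM P X) : HasIndepIncrements X P :=
  hX.indepIncr

theorem isProbabilityMeasure (hX : IsTwoSidedBM P X) : IsProbabilityMeasure P :=
  (hX.indepIncr 0 (fun _ ↦ 0) monotone_const).isProbabilityMeasure

theorem hasLaw_sub (hX : IsTwoSidedBM P X) {s t : ℝ} (hst : s ≤ t) :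
    HasLaw (fun ω ↦ X t ω - X s ω) (gaussianReal 0 (t - s).toNNReal) P where
  aemeasurable := (hX.aemeas t).sub (hX.aemeas s)
  map_eq := by
    have := hX.isProbabilityMeasure
    rcases hst.eq_or_lt with rfl | hst
    · simp
    · exact hX.gaussIncr s t hst

theorem identDistrib_restrict (hX : IsTwoSidedBM P X) (hY : IsTwoSidedBM Q Y) (I : Finset ℝ) :
    IdentDistrib (fun ω ↦ I.restrict fun t ↦ X t ω) (fun ω ↦ I.restrict fun t ↦ Y t ω) P Q := by
  have identDistrib_sub_zero := identDistrib_restrict_sub_of_hasIndepIncrements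
    hX.hasIndepIncrements hY.hasIndepIncrements
    (fun _ _ hst ↦ (hX.hasLaw_sub hst).identDistrib (hY.hasLaw_sub hst)) 0 I
  have X_ae_eq : (fun ω ↦ I.restrict fun t ↦ X t ω) =ᵐ[P]
      fun ω ↦ I.restrict fun t ↦ X t ω - X 0 ω := by
    filter_upwards [hX.zero] with ω hω
    simp only [hω, sub_zero]
  have Y_ae_eq : (fun ω ↦ I.restrict fun t ↦ Y t ω - Y 0 ω) =ᵐ[Q]
      fun ω ↦ I.restrict fun t ↦ Y t ω := by
    filter_upwards [hY.zero] with ω hω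
    simp only [hω, sub_zero]
  exact (IdentDistrib.of_ae_eq (aemeasurable_pi_lambda _ fun t : I ↦ hX.aemeas t) X_ae_eq).trans
    (identDistrib_sub_zero.trans (.of_ae_eq identDistrib_sub_zero.aemeasurable_snd Y_ae_eq))

end IsTwoSidedBM

section Shift

variable {Ω : Type*} [MeasurableSpace Ω] {P : Measure Ω} [IsFiniteMeasure P]

theorem measure_eq_zero_of_ae_le_inter_of_indepFun {F G : Type*} [MeasurableSpace F]
    [MeasurableSpace G] {f : Ω → F} {g : Ω → G} (hfg : IndepFun f g P) {s : Set Ω} {A : Set F}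
    {C : Set G} (hA : MeasurableSet A) (hC : MeasurableSet C)
    (hs : s ≤ᵐ[P] (f ⁻¹' A ∩ g ⁻¹' C : Set Ω)) (hPs : P (f ⁻¹' A) ≤ P s) (hPC : P (g ⁻¹' C) < 1) :
    P s = 0 := by
  have le_mul : P s ≤ P s * P (g ⁻¹' C) :=
    calc P s ≤ P (f ⁻¹' A ∩ g ⁻¹' C) := measure_mono_ae hs
      _ = P (f ⁻¹' A) * P (g ⁻¹' C) := hfg.measure_inter_preimage_eq_mul A C hA hC
      _ ≤ P s * P (g ⁻¹' C) := by gcongr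
  by_contra ne_zero
  have mul_lt := ENNReal.mul_lt_mul_right ne_zero (measure_ne_top P s) hPC
  rw [mul_one] at mul_lt
  exact mul_lt.not_ge le_mul

theorem unbiased_shift_ne_zero_general {ι E : Type*} [AddZeroClass ι] [MeasurableSpace ι]
    [MeasurableSingletonClass ι] [AddGroup E] [MeasurableSpace E] [MeasurableSingletonClass E]
    {X : ι → Ω → E} (hX : ∀ᵐ ω ∂P, X 0 ω = 0) {T : Ω → ι}
    (hT : Measurable[MeasurableSpace.comap (fun ω t ↦ X t ω) inferInstance] T)
    (hlaw : ∀ I : Finset ι, IdentDistrib (fun ω ↦ I.restrict fun t ↦ X t ω)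
      (fun ω ↦ I.restrict fun t ↦ X (T ω + t) ω - X (T ω) ω) P P)
    (hind : IndepFun (fun ω t ↦ X (T ω + t) ω - X (T ω) ω) (fun ω ↦ X (T ω) ω) P)
    (hXT : P {ω | X (T ω) ω = 0} < 1) :
    P {ω | T ω = 0} = 0 := by
  obtain ⟨A, hA, hAT⟩ := hT (measurableSet_singleton 0)
  have mem_A_iff (ω : Ω) : (fun t ↦ X t ω) ∈ A ↔ T ω = 0 := Set.ext_iff.1 hAT ω
  refine measure_eq_zero_of_ae_le_inter_of_indepFun hind hA (measurableSet_singleton 0) ?_ ?_ hXT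
  · filter_upwards [hX] with ω hX0 (hT0 : T ω = 0)
    have path_mem : (fun t ↦ X t ω) ∈ A := (mem_A_iff ω).2 hT0
    refine ⟨?_, ?_⟩
    · simpa [hT0, hX0] using path_mem
    · simp [hT0, hX0]
  · exact (measure_preimage_path_eq hlaw hA).symm.trans_le (measure_mono fun ω ↦ (mem_A_iff ω).1)

end Shift

theorem Embeds.measure_preimage {Ω : Type*} [MeasurableSpace Ω] {P : Measure Ω} {B : ℝ → Ω → ℝ}
    {T : Ω → ℝ} {ν : Measure ℝ} [NeZero ν] (h : Embeds P B T ν) {A : Set ℝ}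
    (hA : MeasurableSet A) : P ((fun ω ↦ B (T ω) ω) ⁻¹' A) = ν A := by
  have aemeasurable_value : AEMeasurable (fun ω ↦ B (T ω) ω) P :=
    AEMeasurable.of_map_ne_zero (h.symm ▸ NeZero.ne ν)
  rw [← h, Measure.map_apply_of_aemeasurable aemeasurable_value hA]

/-- if `ν({0}) < 1`, every unbiased shift embedding `ν` is a.s. nonzero. -/
theorem unbiased_shift_ne_zero {Ω : Type*} [MeasurableSpace Ω]
    (P : Measure Ω) [IsProbabilityMeasure P]
    (B : ℝ → Ω → ℝ) (hB : IsTwoSidedBM P B)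
    (ν : Measure ℝ) [IsProbabilityMeasure ν] (hν : ν {0} < 1)
    (T : Ω → ℝ) (hT : IsUnbiasedShift P B T) (hTν : Embeds P B T ν) :
    P {ω | T ω = 0} = 0 :=
  unbiased_shift_ne_zero_general hB.zero hT.1 (hB.identDistrib_restrict hT.2.1) hT.2.2
    ((hTν.measure_preimage (measurableSet_singleton 0)).trans_lt hν)
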